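/- arXiv:2303.13832 — 4 statements merged into one kernel-verified Lean document; each statement's English description precedes it below -/
import Mathlib

section
/- The relation ∼ on Σ_Λ defined by λ ∼ μ if and only if λ is Σ_Λ-connected to μ is an equivalence relation. -/
/-!
Write `a → b` when `a, b ∈ S` and `b = a * x` for some `x ∈ S`. Reading off partial products,
a connection from `l` to `m` is the same thing as a path of such steps from `l` to `m` or to `m⁻¹`
(`connectedIn_iff`). When `S` is closed under inversion, the step relation is symmetric
(multiply by `x⁻¹`) and invariant under `a ↦ a⁻¹`, so reachability is an equivalence relation
compatible with inversion. Being connected is then reachability up to inversion, which is again an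
equivalence relation.
-/

open Submodule

/-- An `S`-connection from `l` to `m`: a nonempty list `c = [λ₁,…,λ_k]` of elements of `S`
with `λ₁ = l`, every partial product `λ₁⋯λᵢ ∈ S`, and `λ₁⋯λ_k ∈ {m, m⁻¹}`. -/
def IsConnectionIn {Λ : Type*} [CommGroup Λ] (S : Set Λ) (l m : Λ) (c : List Λ) : Prop :=
  c ≠ [] ∧ (∀ x ∈ c, x ∈ S) ∧ c.head? = some l ∧
    (∀ i : ℕ, i < c.length → (c.take (i + 1)).prod ∈ S) ∧
    (c.prod = m ∨ c.prod = m⁻¹)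

/-- `l` is `S`-connected to `m`. -/
def ConnectedIn {Λ : Type*} [CommGroup Λ] (S : Set Λ) (l m : Λ) : Prop :=
  ∃ c : List Λ, IsConnectionIn S l m c

/-- A `Λ`-graded Poisson color algebra over a field `F` of characteristic zero, with
color group `G` (an additive abelian group), bi-character `ε`, grading group `Λ`
(an abelian group), associative product `mul` and bracket `br`. -/
structure GPCA (F G Λ P : Type*) [Field F] [CharZero F]
    [AddCommGroup G] [DecidableEq G] [CommGroup Λ] [DecidableEq Λ]
    [AddCommGroup P] [Module F P] where
  ε : G → G → F
  ε_ne_zero : ∀ g h, ε g h ≠ 0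
  ε_symm : ∀ g h, ε g h * ε h g = 1
  ε_add_left : ∀ g h f, ε (g + h) f = ε g f * ε h f
  ε_add_right : ∀ g h f, ε g (h + f) = ε g h * ε g f
  mul : P →ₗ[F] P →ₗ[F] P
  br : P →ₗ[F] P →ₗ[F] P
  gradeG : G → Submodule F P
  gradeΛ : Λ → Submodule F P
  internalG : DirectSum.IsInternal gradeG
  internalΛ : DirectSum.IsInternal gradeΛ
  mul_memG : ∀ {g h : G} {x y : P}, x ∈ gradeG g → y ∈ gradeG h →
    mul x y ∈ gradeG (g + h)
  br_memG : ∀ {g h : G} {x y : P}, x ∈ gradeG g → y ∈ gradeG h →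
    br x y ∈ gradeG (g + h)
  mul_assoc : ∀ {g h f : G} {x y z : P}, x ∈ gradeG g → y ∈ gradeG h → z ∈ gradeG f →
    mul (mul x y) z = mul x (mul y z)
  br_skew : ∀ {g h : G} {x y : P}, x ∈ gradeG g → y ∈ gradeG h →
    br x y = - (ε g h • br y x)
  br_jacobi : ∀ {g h f : G} {x y z : P}, x ∈ gradeG g → y ∈ gradeG h → z ∈ gradeG f →
    br x (br y z) = br (br x y) z + ε g h • br y (br x z)
  leibniz : ∀ {g h f : G} {x y z : P}, x ∈ gradeG g → y ∈ gradeG h → z ∈ gradeG f →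
    br (mul x y) z = mul x (br y z) + ε h f • mul (br x z) y
  mul_memΛ : ∀ {l m : Λ} {x y : P}, x ∈ gradeΛ l → y ∈ gradeΛ m →
    mul x y ∈ gradeΛ (l * m)
  br_memΛ : ∀ {l m : Λ} {x y : P}, x ∈ gradeΛ l → y ∈ gradeΛ m →
    br x y ∈ gradeΛ (l * m)

namespace GPCA

variable {F G Λ P : Type*} [Field F] [CharZero F]
  [AddCommGroup G] [DecidableEq G] [CommGroup Λ] [DecidableEq Λ]
  [AddCommGroup P] [Module F P] (PA : GPCA F G Λ P)

/-- The `Λ`-support `Σ_Λ`. -/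
def support : Set Λ := {l | l ≠ 1 ∧ PA.gradeΛ l ≠ ⊥}

/-- The `Λ`-support is symmetric. -/
def SymmetricSupport : Prop := ∀ l ∈ PA.support, l⁻¹ ∈ PA.support

/-- `l` is `Σ_Λ`-connected to `m`. -/
def Connected (l m : Λ) : Prop := ConnectedIn PA.support l m

/-- `[l]` : the set of elements of `Σ_Λ` that are `Σ_Λ`-connected to `l`. -/
def cls (l : Λ) : Set Λ := {m | PA.Connected m l}

/-- The product `A B` of two subspaces. -/
def mulS (A B : Submodule F P) : Submodule F P := Submodule.map₂ PA.mul A B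

/-- The bracket `{A, B}` of two subspaces. -/
def brS (A B : Submodule F P) : Submodule F P := Submodule.map₂ PA.br A B

/-- `I_{[l],1} = span { PA_μ PA_{μ⁻¹} + {PA_μ, PA_{μ⁻¹}} : μ ∈ [l] }`. -/
def I1 (l : Λ) : Submodule F P :=
  ⨆ m ∈ PA.cls l, (PA.mulS (PA.gradeΛ m) (PA.gradeΛ m⁻¹) ⊔ PA.brS (PA.gradeΛ m) (PA.gradeΛ m⁻¹))

/-- `V_{[l]} = ⊕_{μ ∈ [l]} PA_μ`. -/
def V (l : Λ) : Submodule F P := ⨆ m ∈ PA.cls l, PA.gradeΛ m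

/-- `I_{[l]} = I_{[l],1} ⊕ V_{[l]}`. -/
def Ic (l : Λ) : Submodule F P := PA.I1 l ⊔ PA.V l

/-- The centre `Z(PA) = {x : {x,PA} + xPA + PAx = 0}`. -/
def centre : Set P := {x | ∀ y : P, PA.br x y = 0 ∧ PA.mul x y = 0 ∧ PA.mul y x = 0}

/-- An ideal: `{I,PA} + IPA + PAI ⊆ I`. -/
def IsIdeal (I : Submodule F P) : Prop :=
  PA.brS I ⊤ ⊔ PA.mulS I ⊤ ⊔ PA.mulS ⊤ I ≤ I

/-- A subspace compatible with both gradings. -/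
def IsGraded (I : Submodule F P) : Prop :=
  (⨆ g : G, I ⊓ PA.gradeG g) = I ∧ (⨆ l : Λ, I ⊓ PA.gradeΛ l) = I

/-- A graded ideal. -/
def IsGradedIdeal (I : Submodule F P) : Prop := PA.IsGraded I ∧ PA.IsIdeal I

/-- `PA` is gr-simple. -/
def GrSimple : Prop :=
  (PA.brS ⊤ ⊤ ⊔ PA.mulS ⊤ ⊤ ≠ ⊥) ∧ ∀ I : Submodule F P, PA.IsGradedIdeal I → I = ⊥ ∨ I = ⊤

/-- The homogeneous component `PA_{l,g} = PA_l ∩ PA_g`. -/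
def component (l : Λ) (g : G) : Submodule F P := PA.gradeΛ l ⊓ PA.gradeG g

/-- `PA` is of maximal length: `dim PA_{l,g} = 1` whenever `PA_{l,g} ≠ 0`. -/
def MaximalLength : Prop :=
  ∀ (g : G) (l : Λ), PA.component l g ≠ ⊥ → Module.finrank F (PA.component l g) = 1

/-- `PA` is `Σ_Λ`-multiplicative. -/
def Multiplicative : Prop :=
  ∀ (gi gj : G) (l m : Λ), PA.component l gi ≠ ⊥ → PA.component m gj ≠ ⊥ →
    PA.gradeΛ (l * m) ≠ ⊥ →
    PA.brS (PA.component l gi) (PA.component m gj) ⊔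
      PA.mulS (PA.component l gi) (PA.component m gj) ≠ ⊥

/-- `Σ_{λ ∈ Σ_Λ} ( PA_λ PA_{λ⁻¹} + {PA_λ, PA_{λ⁻¹}} )`. -/
def P1sum : Submodule F P :=
  ⨆ l ∈ PA.support, (PA.mulS (PA.gradeΛ l) (PA.gradeΛ l⁻¹) ⊔ PA.brS (PA.gradeΛ l) (PA.gradeΛ l⁻¹))

section Steps

variable {L : Type*} [CommGroup L] {S : Set L}

/-- One step of a connection: passing from a partial product `a ∈ S` to the next one
`b = a * x ∈ S`, where `x ∈ S`. -/
def ConnStep (S : Set L) (a b : L) : Prop := a ∈ S ∧ b ∈ S ∧ ∃ x ∈ S, b = a * x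

/-- Reachability by finitely many (possibly zero) steps. -/
def ConnReach (S : Set L) (a b : L) : Prop := Relation.ReflTransGen (ConnStep S) a b

theorem ConnReach.of_list (t : List L) : ∀ l : L, (∀ x ∈ t, x ∈ S) →
    (∀ i : ℕ, i < (l :: t).length → ((l :: t).take (i + 1)).prod ∈ S) →
    ConnReach S l (l :: t).prod := by
  induction t with
  | nil =>
    intro l _ _
    rw [List.prod_singleton]
    exact Relation.ReflTransGen.refl
  | cons x t ih =>
    intro l ht hp
    have h0 : l ∈ S := by simpa using hp 0 (by simp)
    have h1 : l * x ∈ S := by simpa using hp 1 (by simp)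
    -- The first two letters are merged: the partial products of `(l * x) :: t` are those of
    -- `l :: x :: t` from the second one on.
    have h := ih (l * x) (fun y hy => ht y (by simp [hy])) (fun i hi => by
      have := hp (i + 1) (by simpa using hi)
      simpa [List.take_succ_cons, _root_.mul_assoc] using this)
    have h' : ConnReach S (l * x) (l :: x :: t).prod := by simpa [_root_.mul_assoc] using h
    exact Relation.ReflTransGen.head ⟨h0, h1, x, ht x (by simp), rfl⟩ h'

theorem ConnReach.exists_list {l b : L} (h : ConnReach S l b) (hb : b ∈ S) :
    ∃ t : List L, (∀ x ∈ t, x ∈ S) ∧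
      (∀ i : ℕ, i < (l :: t).length → ((l :: t).take (i + 1)).prod ∈ S) ∧
      (l :: t).prod = b := by
  unfold ConnReach at h
  induction h using Relation.ReflTransGen.head_induction_on with
  | refl =>
    exact ⟨[], by simp, by simpa using hb, by simp⟩
  | head hstep _ ih =>
    obtain ⟨ha, _, x, hx, rfl⟩ := hstep
    obtain ⟨t, ht, hp, rfl⟩ := ih
    refine ⟨x :: t, by simpa [hx] using ht, ?_, by simp [_root_.mul_assoc]⟩
    rintro (_ | i) hi
    · simpa using ha
    · simpa [List.take_succ_cons, _root_.mul_assoc] using hp i (by simpa using hi)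

theorem connectedIn_iff (hS : ∀ a ∈ S, a⁻¹ ∈ S) {l m : L} (hl : l ∈ S) (hm : m ∈ S) :
    ConnectedIn S l m ↔ ConnReach S l m ∨ ConnReach S l m⁻¹ := by
  constructor
  · rintro ⟨c, hne, hc, hhead, hp, hprod⟩
    cases c with
    | nil => exact absurd rfl hne
    | cons a t =>
      obtain rfl : a = l := by simpa using hhead
      have h := ConnReach.of_list t a (fun x hx => hc x (by simp [hx])) hp
      rcases hprod with e | e
      · exact Or.inl (e ▸ h)
      · exact Or.inr (e ▸ h)
  · have key : ∀ b ∈ S, (b = m ∨ b = m⁻¹) → ConnReach S l b → ConnectedIn S l m := by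
      intro b hb hbm h
      obtain ⟨t, ht, hp, rfl⟩ := h.exists_list hb
      exact ⟨l :: t, by simp, by simpa [hl] using ht, by simp, hp, hbm⟩
    rintro (h | h)
    · exact key m hm (Or.inl rfl) h
    · exact key m⁻¹ (hS m hm) (Or.inr rfl) h

theorem ConnReach.symm (hS : ∀ a ∈ S, a⁻¹ ∈ S) {a b : L} (h : ConnReach S a b) :
    ConnReach S b a := by
  have : Std.Symm (ConnStep S) := ⟨by
    rintro a b ⟨ha, hb, x, hx, rfl⟩
    exact ⟨hb, ha, x⁻¹, hS x hx, by simp⟩⟩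
  exact Relation.ReflTransGen.stdSymm.symm _ _ h

theorem ConnReach.inv (hS : ∀ a ∈ S, a⁻¹ ∈ S) {a b : L} (h : ConnReach S a b) :
    ConnReach S a⁻¹ b⁻¹ := by
  refine Relation.ReflTransGen.lift (p := ConnStep S) (fun a => a⁻¹) ?_ _ _ h
  rintro a b ⟨ha, hb, x, hx, rfl⟩
  exact ⟨hS _ ha, hS _ hb, x⁻¹, hS x hx, by simp [mul_comm]⟩

end Steps

/-- The relation `∼` on `Σ_Λ` defined by `l ∼ m` iff `l` is `Σ_Λ`-connected to `m`
is an equivalence relation. -/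
theorem connection_equivalence (hsym : PA.SymmetricSupport) :
    (∀ l ∈ PA.support, PA.Connected l l) ∧
    (∀ l ∈ PA.support, ∀ m ∈ PA.support, PA.Connected l m → PA.Connected m l) ∧
    (∀ l ∈ PA.support, ∀ m ∈ PA.support, ∀ n ∈ PA.support,
      PA.Connected l m → PA.Connected m n → PA.Connected l n) := by
  have hS : ∀ a ∈ PA.support, a⁻¹ ∈ PA.support := hsym
  refine ⟨fun l hl => ?_, fun l hl m hm h => ?_, fun l hl m hm n hn h₁ h₂ => ?_⟩
  · exact (connectedIn_iff hS hl hl).2 (Or.inl Relation.ReflTransGen.refl)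
  · refine (connectedIn_iff hS hm hl).2 (((connectedIn_iff hS hl hm).1 h).imp ?_ ?_)
    · exact fun h => h.symm hS
    · exact fun h => by simpa using (h.symm hS).inv hS
  · refine (connectedIn_iff hS hl hn).2 ?_
    rcases (connectedIn_iff hS hl hm).1 h₁ with h₁ | h₁
    · exact ((connectedIn_iff hS hm hn).1 h₂).imp h₁.trans h₁.trans
    -- From `m⁻¹` the inverted path leads to `n⁻¹` or `n`.
    · rcases (connectedIn_iff hS hm hn).1 h₂ with h₂ | h₂
      · exact Or.inr (h₁.trans (h₂.inv hS))
      · have h₃ : ConnReach PA.support m⁻¹ n := by simpa using h₂.inv hS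
        exact Or.inl (h₁.trans h₃)

end GPCA
end

section
/- If μ ∈ [λ] and both η and μη lie in Σ_Λ, then η ∈ [λ] and μη ∈ [λ]. -/
/-!
If `[m, c₂, …, c_k]` connects `m` to `l`, then `[m η, η⁻¹, c₂, …, c_k]` connects `m η` to `l`, and
`[η, m, η⁻¹, c₂, …, c_k]` connects `η` to `l`: the partial products are `(η,) m η, m, m c₂, …`.
Both lists arise by splitting the first entry of a connection, which is `connectedIn_of_mul`.
-/

open Submodule

namespace GPCA

variable {F G Λ P : Type*} [Field F] [CharZero F]
  [AddCommGroup G] [DecidableEq G] [CommGroup Λ] [DecidableEq Λ]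
  [AddCommGroup P] [Module F P] (PA : GPCA F G Λ P)

/-- A connection starting at `a * b` lifts to one starting at `a`: split its first entry `a * b`
into the two entries `a, b`. -/
theorem connectedIn_of_mul {Λ : Type*} [CommGroup Λ] {S : Set Λ} {a b l : Λ}
    (ha : a ∈ S) (hb : b ∈ S) (h : ConnectedIn S (a * b) l) : ConnectedIn S a l := by
  obtain ⟨c, hne, hmem, hhead, hprod, hend⟩ := h
  obtain _ | ⟨x, t⟩ := c
  · exact absurd rfl hne
  obtain rfl : x = a * b := by simpa using hhead
  refine ⟨a :: b :: t, by simp, ?_, rfl, ?_, ?_⟩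
  · intro y hy
    simp only [List.mem_cons] at hy
    rcases hy with rfl | rfl | hy
    · exact ha
    · exact hb
    · exact hmem y (List.mem_cons_of_mem _ hy)
  · rintro (_ | j) hj
    · simpa using ha
    -- From the second one on, the partial products are those of the original connection.
    · have := hprod j (by simpa using hj)
      simpa [_root_.mul_assoc] using this
  · simpa [_root_.mul_assoc] using hend

/-- If `m ∈ [l]` and both `η` and `m * η` lie in `Σ_Λ`, then `η ∈ [l]` and `m * η ∈ [l]`. -/
theorem mem_cls_of_mul_mem (hsym : PA.SymmetricSupport) (l m η : Λ)
    (hl : l ∈ PA.support) (hm : m ∈ PA.cls l) (hη : η ∈ PA.support)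
    (hmη : m * η ∈ PA.support) :
    η ∈ PA.cls l ∧ m * η ∈ PA.cls l := by
  have hmul : m * η ∈ PA.cls l :=
    connectedIn_of_mul hmη (hsym η hη) (by rw [mul_inv_cancel_right]; exact hm)
  have hmS : m ∈ PA.support := by
    obtain ⟨c, -, hmem, hhead, -⟩ := hm
    exact hmem m (List.mem_of_mem_head? hhead)
  exact ⟨connectedIn_of_mul hη hmS (by rw [mul_comm]; exact hmul), hmul⟩

end GPCA
end

section
/- For any λ ∈ Σ_Λ, the subspace V_{[λ]} satisfies {V_{[λ]}, V_{[λ]}} + V_{[λ]} V_{[λ]} ⊆ I_{[λ]}; more precisely, for μ, η ∈ [λ], if μ = η⁻¹ then {𝒫_μ, 𝒫_η} + 𝒫_μ 𝒫_η ⊆ I_{[λ],1}, while if μ ≠ η⁻¹ and {𝒫_μ, 𝒫_η} + 𝒫_μ 𝒫_η ≠ 0 then μη ∈ [λ] and {𝒫_μ, 𝒫_η} + 𝒫_μ 𝒫_η ⊆ 𝒫_{μη} ⊆ V_{[λ]}. -/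
/-!
By bilinearity it suffices to treat two degrees `m, η ∈ [l]`. If `η = m⁻¹`, the products are among
the generators of `I_{[l],1}`. Otherwise they lie in `𝒫_{mη}` with `mη ≠ 1`, so if they do not
vanish then `mη` is in the support, and the point is that `mη` is connected to `l`. A connection
`m, λ₂, …, λ_k` from `m` to `l` yields the connection `mη, η⁻¹, λ₂, …, λ_k`, where `η⁻¹` is in the
support by symmetry (`GPCA.mul_mem_cls`).
-/

open Submodule

namespace GPCA

variable {F G Λ P : Type*} [Field F] [CharZero F]
  [AddCommGroup G] [DecidableEq G] [CommGroup Λ] [DecidableEq Λ]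
  [AddCommGroup P] [Module F P] (PA : GPCA F G Λ P)

/-- Replacing the head `m` of a connection by the two steps `m * η, η⁻¹` gives a connection
starting at `m * η`: its second partial product is `m` again, and the later ones are unchanged. -/
theorem mul_mem_cls (hsym : PA.SymmetricSupport) {l m η : Λ} (hm : m ∈ PA.cls l)
    (hη : η ∈ PA.support) (hmη : m * η ∈ PA.support) : m * η ∈ PA.cls l := by
  obtain ⟨c, hne, hS, hhead, hpart, hend⟩ := hm
  cases c with
  | nil => exact absurd rfl hne
  | cons a t =>
    obtain rfl : a = m := by simpa using hhead
    refine ⟨a * η :: η⁻¹ :: t, by simp, ?_, rfl, ?_, by simpa [← mul_assoc] using hend⟩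
    · intro x hx
      rcases List.mem_cons.1 hx with rfl | hx
      · exact hmη
      rcases List.mem_cons.1 hx with rfl | hx
      · exact hsym _ hη
      · exact hS _ (List.mem_cons_of_mem _ hx)
    · rintro (_ | i) hi
      · simpa using hmη
      · have := hpart i (by simpa using hi)
        simpa [← mul_assoc] using this

theorem mem_support_of_mem_cls {l m : Λ} (hm : m ∈ PA.cls l) : m ∈ PA.support := by
  obtain ⟨c, -, hS, hhead, -⟩ := hm
  exact hS _ (List.mem_of_head? hhead)

theorem products_le_grade (m η : Λ) :
    PA.brS (PA.gradeΛ m) (PA.gradeΛ η) ⊔ PA.mulS (PA.gradeΛ m) (PA.gradeΛ η) ≤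
      PA.gradeΛ (m * η) :=
  sup_le (Submodule.map₂_le.2 fun _ hx _ hy => PA.br_memΛ hx hy)
    (Submodule.map₂_le.2 fun _ hx _ hy => PA.mul_memΛ hx hy)

theorem grade_le_V {l m : Λ} (hm : m ∈ PA.cls l) : PA.gradeΛ m ≤ PA.V l :=
  le_iSup₂_of_le m hm le_rfl

theorem products_le_I1 {l m η : Λ} (hm : m ∈ PA.cls l) (h : m = η⁻¹) :
    PA.brS (PA.gradeΛ m) (PA.gradeΛ η) ⊔ PA.mulS (PA.gradeΛ m) (PA.gradeΛ η) ≤ PA.I1 l := by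
  obtain rfl : η = m⁻¹ := by simp [h]
  rw [sup_comm]
  exact le_iSup₂_of_le (f := fun m (_ : m ∈ PA.cls l) =>
    PA.mulS (PA.gradeΛ m) (PA.gradeΛ m⁻¹) ⊔ PA.brS (PA.gradeΛ m) (PA.gradeΛ m⁻¹)) m hm le_rfl

/-- A nonzero product lives in degree `m * η ≠ 1`, which is therefore in the support. -/
theorem mul_mem_cls_of_products_ne_bot (hsym : PA.SymmetricSupport) {l m η : Λ}
    (hm : m ∈ PA.cls l) (hη : η ∈ PA.cls l) (h : m ≠ η⁻¹)
    (h0 : PA.brS (PA.gradeΛ m) (PA.gradeΛ η) ⊔ PA.mulS (PA.gradeΛ m) (PA.gradeΛ η) ≠ ⊥) :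
    m * η ∈ PA.cls l :=
  PA.mul_mem_cls hsym hm (PA.mem_support_of_mem_cls hη)
    ⟨fun h1 => h (eq_inv_of_mul_eq_one_left h1),
      fun hb => h0 (le_bot_iff.1 (hb ▸ PA.products_le_grade m η))⟩

theorem products_le_Ic (hsym : PA.SymmetricSupport) {l m η : Λ}
    (hm : m ∈ PA.cls l) (hη : η ∈ PA.cls l) :
    PA.brS (PA.gradeΛ m) (PA.gradeΛ η) ⊔ PA.mulS (PA.gradeΛ m) (PA.gradeΛ η) ≤ PA.Ic l := by
  by_cases h : m = η⁻¹
  · exact (PA.products_le_I1 hm h).trans le_sup_left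
  by_cases h0 : PA.brS (PA.gradeΛ m) (PA.gradeΛ η) ⊔ PA.mulS (PA.gradeΛ m) (PA.gradeΛ η) = ⊥
  · exact h0 ▸ bot_le
  · exact ((PA.products_le_grade m η).trans
      (PA.grade_le_V (PA.mul_mem_cls_of_products_ne_bot hsym hm hη h h0))).trans le_sup_right

/-- `{V_{[l]}, V_{[l]}} + V_{[l]} V_{[l]} ⊆ I_{[l]}`; more precisely, for `m, η ∈ [l]`,
if `m = η⁻¹` then `{𝒫_m, 𝒫_η} + 𝒫_m 𝒫_η ⊆ I_{[l],1}`, while if `m ≠ η⁻¹` and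
`{𝒫_m, 𝒫_η} + 𝒫_m 𝒫_η ≠ 0` then `m * η ∈ [l]` and
`{𝒫_m, 𝒫_η} + 𝒫_m 𝒫_η ⊆ 𝒫_{mη} ⊆ V_{[l]}`. -/
theorem V_products (hsym : PA.SymmetricSupport) (l : Λ) (hl : l ∈ PA.support) :
    (PA.brS (PA.V l) (PA.V l) ⊔ PA.mulS (PA.V l) (PA.V l) ≤ PA.Ic l) ∧
    (∀ m ∈ PA.cls l, ∀ η ∈ PA.cls l,
      (m = η⁻¹ →
        PA.brS (PA.gradeΛ m) (PA.gradeΛ η) ⊔ PA.mulS (PA.gradeΛ m) (PA.gradeΛ η) ≤ PA.I1 l) ∧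
      (m ≠ η⁻¹ →
        PA.brS (PA.gradeΛ m) (PA.gradeΛ η) ⊔ PA.mulS (PA.gradeΛ m) (PA.gradeΛ η) ≠ ⊥ →
        m * η ∈ PA.cls l ∧
        PA.brS (PA.gradeΛ m) (PA.gradeΛ η) ⊔ PA.mulS (PA.gradeΛ m) (PA.gradeΛ η) ≤
          PA.gradeΛ (m * η) ∧
        PA.gradeΛ (m * η) ≤ PA.V l)) := by
  refine ⟨sup_le ?_ ?_, fun m hm η hη => ⟨PA.products_le_I1 hm, fun h h0 => ?_⟩⟩
  · simp only [brS, V, Submodule.map₂_iSup_left, Submodule.map₂_iSup_right, iSup_le_iff]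
    exact fun m hm η hη => le_sup_left.trans (PA.products_le_Ic hsym (by assumption) (by assumption))
  · simp only [mulS, V, Submodule.map₂_iSup_left, Submodule.map₂_iSup_right, iSup_le_iff]
    exact fun m hm η hη => le_sup_right.trans (PA.products_le_Ic hsym (by assumption) (by assumption))
  · have hmη := PA.mul_mem_cls_of_products_ne_bot hsym hm hη h h0
    exact ⟨hmη, PA.products_le_grade m η, PA.grade_le_V hmη⟩

end GPCA
end

section
/- For λ, μ ∈ Σ_Λ with μ ∉ [λ], one has {V_{[λ]}, V_{[μ]}} + V_{[λ]} V_{[μ]} = 0; equivalently, for any λ' ∈ [λ] and μ' ∈ [μ], {𝒫_{λ'}, 𝒫_{μ'}} + 𝒫_{λ'} 𝒫_{μ'} = 0. -/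
/-!
If `𝒫_{l'} 𝒫_{m'}` or `{𝒫_{l'}, 𝒫_{m'}}` is nonzero, then `𝒫_{l'm'} ≠ 0`, so either `l'm' = 1`, and
`m' = l'⁻¹` is connected to `l'`, or `l'm'` lies in the support, and `(l', m', l'⁻¹)` is a connection
from `l'` to `m'`. Since being connected is an equivalence relation on a symmetric support, this
would force `m ∈ [l]`.

Symmetry and transitivity of connectedness are obtained by identifying it with the
reflexive-transitive closure of an elementary symmetric relation `Step` on the support
(`rtg_of_connectedIn`, `connectedIn_of_rtg`).
-/

open Submodule

namespace GPCA

variable {F G Λ P : Type*} [Field F] [CharZero F]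
  [AddCommGroup G] [DecidableEq G] [CommGroup Λ] [DecidableEq Λ]
  [AddCommGroup P] [Module F P] (PA : GPCA F G Λ P)

/-- The elementary move between elements of `S` underlying connections: multiplication by an element
of `S`, or inversion. -/
def Step {Λ : Type*} [CommGroup Λ] (S : Set Λ) (a b : Λ) : Prop :=
  a ∈ S ∧ b ∈ S ∧ ((∃ x ∈ S, b = a * x) ∨ b = a⁻¹)

theorem Step.symm {Λ : Type*} [CommGroup Λ] {S : Set Λ} (hS : ∀ x ∈ S, x⁻¹ ∈ S) {a b : Λ}
    (h : Step S a b) : Step S b a := by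
  obtain ⟨ha, hb, ⟨x, hx, rfl⟩ | rfl⟩ := h
  · exact ⟨hb, ha, Or.inl ⟨x⁻¹, hS x hx, by simp⟩⟩
  · exact ⟨hb, ha, Or.inr (by simp)⟩

theorem rtg_symm {Λ : Type*} [CommGroup Λ] {S : Set Λ} (hS : ∀ x ∈ S, x⁻¹ ∈ S) {a b : Λ}
    (h : Relation.ReflTransGen (Step S) a b) : Relation.ReflTransGen (Step S) b a := by
  induction h with
  | refl => exact .refl
  | tail _ hs ih => exact .head (hs.symm hS) ih

theorem rtg_mul_prod {Λ : Type*} [CommGroup Λ] {S : Set Λ} (t : List Λ) (a : Λ)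
    (ht : ∀ x ∈ t, x ∈ S) (hp : ∀ i ≤ t.length, a * (t.take i).prod ∈ S) :
    Relation.ReflTransGen (Step S) a (a * t.prod) := by
  induction t generalizing a with
  | nil => simpa using Relation.ReflTransGen.refl
  | cons x t ih =>
    have h0 : a ∈ S := by simpa using hp 0 (by simp)
    have h1 : a * x ∈ S := by simpa using hp 1 (by simp)
    have h := ih (a * x) (fun y hy => ht y (by simp [hy])) (fun i hi => by
      simpa [_root_.mul_assoc] using hp (i + 1) (by simpa using hi))
    rw [List.prod_cons, ← _root_.mul_assoc]
    exact .head ⟨h0, h1, Or.inl ⟨x, ht x (by simp), rfl⟩⟩ h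

theorem ConnectedIn.mem_left {Λ : Type*} [CommGroup Λ] {S : Set Λ} {a b : Λ}
    (h : ConnectedIn S a b) : a ∈ S := by
  obtain ⟨c, -, hc, hh, -⟩ := h
  exact hc a (List.mem_of_mem_head? hh)

theorem rtg_of_connectedIn {Λ : Type*} [CommGroup Λ] {S : Set Λ} {a b : Λ}
    (hb : b ∈ S) (h : ConnectedIn S a b) : Relation.ReflTransGen (Step S) a b := by
  obtain ⟨c, hne, hc, hh, hp, he⟩ := h
  cases c with
  | nil => exact absurd rfl hne
  | cons y t =>
    obtain rfl : y = a := by simpa using hh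
    have h := rtg_mul_prod t y (fun x hx => hc x (by simp [hx])) (fun i hi => by
      simpa using hp i (by simpa [Nat.lt_succ_iff] using hi))
    have hmem : y * t.prod ∈ S := by simpa using hp t.length (by simp)
    rw [List.prod_cons] at he
    obtain he | he := he
    · exact he ▸ h
    · exact h.tail ⟨hmem, hb, Or.inr (by simp [he])⟩

/-- A connection to `b` may end at `b` or at `b⁻¹`; in the second case a move `b ↦ b * x` is
realized by appending `x⁻¹`. -/
theorem connectedIn_of_rtg {Λ : Type*} [CommGroup Λ] {S : Set Λ} (hS : ∀ x ∈ S, x⁻¹ ∈ S)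
    {a b : Λ} (ha : a ∈ S) (h : Relation.ReflTransGen (Step S) a b) : ConnectedIn S a b := by
  have append : ∀ (c : List Λ) (x : Λ), c ≠ [] → (∀ y ∈ c, y ∈ S) → c.head? = some a →
      (∀ i : ℕ, i < c.length → (c.take (i + 1)).prod ∈ S) → x ∈ S → c.prod * x ∈ S →
      ∀ d, (c.prod * x = d ∨ c.prod * x = d⁻¹) → ConnectedIn S a d := by
    intro c x hne hc hh hp hx hcx d hd
    refine ⟨c ++ [x], by simp, ?_, ?_, ?_, by simpa using hd⟩
    · intro y hy
      rcases List.mem_append.1 hy with hy | hy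
      · exact hc y hy
      · rw [List.mem_singleton.1 hy]; exact hx
    · rw [List.head?_append_of_ne_nil _ hne, hh]
    · intro i hi
      rcases Nat.lt_or_ge i c.length with h | h
      · rw [List.take_append_of_le_length (by omega)]
        exact hp i h
      · rw [List.take_of_length_le (by simp; omega)]
        simpa using hcx
  induction h with
  | refl => exact ⟨[a], by simp, by simpa using ha, rfl, by simpa using ha, by simp⟩
  | @tail b' _ _ hs ih =>
    obtain ⟨c, hne, hc, hh, hp, he⟩ := ih
    obtain ⟨-, hd, ⟨x, hx, rfl⟩ | rfl⟩ := hs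
    · obtain he | he := he
      · exact append c x hne hc hh hp hx (he ▸ hd) _ (Or.inl (by rw [he]))
      · have e : c.prod * x⁻¹ = (b' * x)⁻¹ := by rw [he, mul_inv]
        exact append c x⁻¹ hne hc hh hp (hS x hx) (e ▸ hS _ hd) _ (Or.inr e)
    · exact ⟨c, hne, hc, hh, hp, by simpa using he.symm⟩

theorem rtg_of_grade_mul_ne_bot (hsym : PA.SymmetricSupport) {a b : Λ}
    (ha : a ∈ PA.support) (hb : b ∈ PA.support) (h : PA.gradeΛ (a * b) ≠ ⊥) :
    Relation.ReflTransGen (Step PA.support) a b := by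
  by_cases h1 : a * b = 1
  · exact .single ⟨ha, hb, Or.inr (eq_inv_of_mul_eq_one_right h1)⟩
  · have hab : a * b ∈ PA.support := ⟨h1, h⟩
    exact .head ⟨ha, hab, Or.inl ⟨b, hb, rfl⟩⟩
      (.single ⟨hab, hb, Or.inl ⟨a⁻¹, hsym a ha, by simp⟩⟩)

/-- For `l, m ∈ Σ_Λ` with `m ∉ [l]`, one has `{V_{[l]}, V_{[m]}} + V_{[l]} V_{[m]} = 0`;
equivalently, for any `l' ∈ [l]` and `m' ∈ [m]`, `{𝒫_{l'}, 𝒫_{m'}} + 𝒫_{l'} 𝒫_{m'} = 0`. -/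
theorem V_orthogonal (hsym : PA.SymmetricSupport) (l m : Λ)
    (hl : l ∈ PA.support) (hm : m ∈ PA.support) (hnc : m ∉ PA.cls l) :
    (PA.brS (PA.V l) (PA.V m) ⊔ PA.mulS (PA.V l) (PA.V m) = ⊥) ∧
    (∀ l' ∈ PA.cls l, ∀ m' ∈ PA.cls m,
      PA.brS (PA.gradeΛ l') (PA.gradeΛ m') ⊔ PA.mulS (PA.gradeΛ l') (PA.gradeΛ m') = ⊥) := by
  have key : ∀ l' ∈ PA.cls l, ∀ m' ∈ PA.cls m, PA.gradeΛ (l' * m') = ⊥ := by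
    intro l' hl' m' hm'
    by_contra hne
    have h := PA.rtg_of_grade_mul_ne_bot hsym (ConnectedIn.mem_left hl') (ConnectedIn.mem_left hm') hne
    refine hnc (connectedIn_of_rtg hsym hm
      ((rtg_symm hsym (h.trans (rtg_of_connectedIn hm hm'))).trans (rtg_of_connectedIn hl hl')))
  have hbr : ∀ l' ∈ PA.cls l, ∀ m' ∈ PA.cls m,
      PA.brS (PA.gradeΛ l') (PA.gradeΛ m') = ⊥ := fun l' hl' m' hm' =>
    le_bot_iff.1 (Submodule.map₂_le.2 fun _ hx _ hy => key l' hl' m' hm' ▸ PA.br_memΛ hx hy)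
  have hmul : ∀ l' ∈ PA.cls l, ∀ m' ∈ PA.cls m,
      PA.mulS (PA.gradeΛ l') (PA.gradeΛ m') = ⊥ := fun l' hl' m' hm' =>
    le_bot_iff.1 (Submodule.map₂_le.2 fun _ hx _ hy => key l' hl' m' hm' ▸ PA.mul_memΛ hx hy)
  refine ⟨?_, fun l' hl' m' hm' => by rw [hbr l' hl' m' hm', hmul l' hl' m' hm', bot_sup_eq]⟩
  simp only [brS, mulS] at hbr hmul
  simp only [brS, mulS, V, Submodule.map₂_iSup_left, Submodule.map₂_iSup_right, sup_eq_bot_iff,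
    iSup_eq_bot]
  exact ⟨fun l' hl' m' hm' => hbr _ (by assumption) _ (by assumption),
    fun l' hl' m' hm' => hmul _ (by assumption) _ (by assumption)⟩

end GPCA
end
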